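/- Let h > 0 and let w be a complex number with Re w > 0. Then ∫₀^∞ u·J₀(h·u)/(u² + w²) du = K₀(h·w), where K₀(z) = ∫₀^∞ exp(−z cosh t) dt for Re z > 0. (This is the Hankel–Nicholson formula with ν = 0, μ = 0, used to evaluate the two-dimensional SSRF covariance for all η1 > −2, η1 ≠ 2.) -/

import Mathlib

open MeasureTheory Real Filter

/-- Bessel function of the first kind of order zero,
`J₀(x) = (1/π) ∫₀^π cos (x sin θ) dθ`. -/
noncomputable def besselJ0 (x : ℝ) : ℝ :=
  (1 / Real.pi) * ∫ θ in (0:ℝ)..Real.pi, Real.cos (x * Real.sin θ)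

/-- Modified Bessel function of the second kind of order zero of a complex
argument with `Re z > 0`, `K₀(z) = ∫₀^∞ exp (−z cosh t) dt`. -/
noncomputable def besselK0C (w : ℂ) : ℂ :=
  ∫ t in Set.Ioi (0:ℝ), Complex.exp (-w * (Real.cosh t : ℂ))

/-!
By scaling one may take `h = 1`. Since only `Re w > 0` is assumed, `Re (u² + w²)` may be negative,
but `(u² + w²) / w = u² / w + w` always has positive real part, so that
`1 / (u² + w²) = w⁻¹ ∫₀^∞ exp (-(u² / w + w) t) dt`.
After exchanging the integrals over `[0, R]` and `(0, ∞)`, the inner integral is a truncated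
Hankel transform of the Gaussian of parameter `b = t / w`. Its limit as `R → ∞` is
`exp (-1 / (4b)) / (2b)`, by the Fourier transform of a planar Gaussian in polar coordinates.
Integrating by parts with `d/du (u J₁(u)) = u J₀(u)` and `|J₁| ≤ 1` bounds it by a multiple of
`t ^ (-1/2)`, uniformly in `R`, so the limit passes under the integral over `t`. Finally
`t = exp s / 2` turns `∫₀^∞ exp (-w t - w / (4t)) / (2t) dt` into `K₀(w)`.
-/

/-- Bessel function of the first kind of order one, in the form
`J₁(x) = (1/π) ∫₀^π sin (x sin θ) sin θ dθ` obtained by differentiating the integral for `-J₀`. -/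
noncomputable def besselJ1 (x : ℝ) : ℝ :=
  (1 / π) * ∫ θ in (0:ℝ)..π, sin (x * sin θ) * sin θ

lemma abs_one_div_pi_mul_integral_le_one {f : ℝ → ℝ} (hf : ∀ θ, |f θ| ≤ 1) :
    |(1 / π) * ∫ θ in (0:ℝ)..π, f θ| ≤ 1 := by
  have hbound := intervalIntegral.norm_integral_le_of_norm_le_const (a := 0) (b := π) (C := 1)
    (f := f) fun θ _ => hf θ
  rw [norm_eq_abs, sub_zero, abs_of_pos pi_pos, one_mul] at hbound
  rwa [abs_mul, abs_of_pos (by positivity), one_div, inv_mul_le_one₀ pi_pos]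

lemma abs_besselJ1_le_one (x : ℝ) : |besselJ1 x| ≤ 1 :=
  abs_one_div_pi_mul_integral_le_one fun θ => by
    rw [abs_mul]
    exact mul_le_one₀ (abs_sin_le_one _) (abs_nonneg _) (abs_sin_le_one _)

@[fun_prop]
lemma continuous_besselJ0 : Continuous besselJ0 :=
  continuous_const.mul <|
    intervalIntegral.continuous_parametric_intervalIntegral_of_continuous' (by fun_prop) _ _

@[fun_prop]
lemma continuous_besselJ1 : Continuous besselJ1 :=
  continuous_const.mul <|
    intervalIntegral.continuous_parametric_intervalIntegral_of_continuous' (by fun_prop) _ _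

lemma hasDerivAt_besselJ1 (x : ℝ) :
    HasDerivAt besselJ1 ((1 / π) * ∫ θ in (0:ℝ)..π, cos (x * sin θ) * sin θ ^ 2) x := by
  refine HasDerivAt.const_mul _
    (intervalIntegral.hasDerivAt_integral_of_dominated_loc_of_deriv_le
      (F := fun x θ => sin (x * sin θ) * sin θ) (F' := fun x θ => cos (x * sin θ) * sin θ ^ 2)
      (bound := fun _ => 1) univ_mem ?_ ?_ ?_ ?_ intervalIntegrable_const ?_).2
  · exact .of_forall fun x => (by fun_prop : Continuous _).aestronglyMeasurable
  · exact (by fun_prop : Continuous _).intervalIntegrable _ _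
  · exact (by fun_prop : Continuous _).aestronglyMeasurable
  · refine .of_forall fun θ _ y _ => ?_
    rw [norm_mul, norm_pow]
    exact mul_le_one₀ (abs_cos_le_one _) (by positivity)
      (pow_le_one₀ (norm_nonneg _) (abs_sin_le_one _))
  · refine .of_forall fun θ _ y _ => ?_
    convert! (((hasDerivAt_id y).mul_const (sin θ)).sin).mul_const (sin θ) using 1
    simp only [id]
    ring

lemma besselJ1_eq_mul_integral_cos_mul_cos_sq (x : ℝ) :
    besselJ1 x = (1 / π) * (x * ∫ θ in (0:ℝ)..π, cos (x * sin θ) * cos θ ^ 2) := by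
  have hparts := intervalIntegral.integral_mul_deriv_eq_deriv_mul (a := 0) (b := π)
    (u := fun θ => sin (x * sin θ)) (v := fun θ => -cos θ)
    (u' := fun θ => cos (x * sin θ) * (x * cos θ)) (v' := sin)
    (fun θ _ => ((hasDerivAt_sin θ).const_mul x).sin)
    (fun θ _ => by simpa using! (hasDerivAt_cos θ).neg)
    ((by fun_prop : Continuous _).intervalIntegrable _ _)
    ((by fun_prop : Continuous _).intervalIntegrable _ _)
  rw [besselJ1, hparts, ← intervalIntegral.integral_const_mul]
  simp only [sin_pi, sin_zero, mul_zero, zero_mul, sub_self, zero_sub,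
    ← intervalIntegral.integral_neg]
  congr 2
  ext θ
  ring

lemma besselJ0_eq_integral_add_integral (x : ℝ) :
    besselJ0 x = (1 / π) * ((∫ θ in (0:ℝ)..π, cos (x * sin θ) * cos θ ^ 2) +
      ∫ θ in (0:ℝ)..π, cos (x * sin θ) * sin θ ^ 2) := by
  rw [besselJ0, ← intervalIntegral.integral_add
    ((by fun_prop : Continuous _).intervalIntegrable _ _)
    ((by fun_prop : Continuous _).intervalIntegrable _ _)]
  simp only [← mul_add, cos_sq_add_sin_sq, mul_one]

lemma hasDerivAt_mul_besselJ1 (x : ℝ) :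
    HasDerivAt (fun y => y * besselJ1 y) (x * besselJ0 x) x := by
  convert! (hasDerivAt_id x).mul (hasDerivAt_besselJ1 x) using 1
  rw [besselJ1_eq_mul_integral_cos_mul_cos_sq, besselJ0_eq_integral_add_integral]
  simp only [id]
  ring

lemma integral_cexp_mul_sin_mul_I (x : ℝ) :
    ∫ θ in (-π)..π, Complex.exp ((x * sin θ : ℝ) * Complex.I) = 2 * π * besselJ0 x := by
  set f : ℝ → ℂ := fun θ => Complex.exp ((x * sin θ : ℝ) * Complex.I) with hf
  have hf_int (a b : ℝ) : IntervalIntegrable f volume a b :=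
    (by fun_prop : Continuous f).intervalIntegrable a b
  have hf_neg_int : IntervalIntegrable (fun θ => f (-θ)) volume 0 π :=
    (by fun_prop : Continuous fun θ => f (-θ)).intervalIntegrable 0 π
  have hreflect : ∫ θ in (-π)..0, f θ = ∫ θ in (0:ℝ)..π, f (-θ) := by
    rw [intervalIntegral.integral_comp_neg, neg_zero]
  have hsum (θ : ℝ) : f (-θ) + f θ = 2 * (cos (x * sin θ) : ℝ) := by
    rw [Complex.ofReal_cos, Complex.two_cos, add_comm]
    simp only [hf, sin_neg, mul_neg, Complex.ofReal_neg]
  rw [← intervalIntegral.integral_add_adjacent_intervals (hf_int _ 0) (hf_int 0 _), hreflect,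
    ← intervalIntegral.integral_add hf_neg_int (hf_int _ _), besselJ0]
  simp only [hsum]
  rw [intervalIntegral.integral_const_mul, intervalIntegral.integral_ofReal]
  push_cast
  field_simp

lemma integral_comp_norm_mul_cexp_im_mul_I {g : ℝ → ℂ}
    (hg : IntegrableOn (fun r => r * g r) (Set.Ioi 0)) (h : ℝ) :
    ∫ z : ℂ, g ‖z‖ * Complex.exp ((h * z.im : ℝ) * Complex.I) =
      2 * π * ∫ r in Set.Ioi (0:ℝ), (r * besselJ0 (h * r) : ℝ) * g r := by
  have hpolar : ∀ p ∈ polarCoord.target,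
      p.1 • (g ‖Complex.polarCoord.symm p‖ *
        Complex.exp ((h * (Complex.polarCoord.symm p).im : ℝ) * Complex.I)) =
      (p.1 * g p.1) * Complex.exp (((h * p.1) * sin p.2 : ℝ) * Complex.I) := by
    rintro ⟨r, θ⟩ ⟨hr : 0 < r, -⟩
    have him : (Complex.polarCoord.symm (r, θ)).im = r * sin θ := by
      simp [Complex.polarCoord_symm_apply, Complex.sin_ofReal_re]
    rw [Complex.norm_polarCoord_symm, abs_of_pos hr, him, Complex.real_smul, ← mul_assoc,
      mul_assoc h]
  have hangular (r : ℝ) :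
      ∫ θ in Set.Ioo (-π) π, (r * g r) * Complex.exp (((h * r) * sin θ : ℝ) * Complex.I) =
        2 * π * ((r * besselJ0 (h * r) : ℝ) * g r) := by
    rw [integral_const_mul, ← integral_Ioc_eq_integral_Ioo,
      ← intervalIntegral.integral_of_le (by linarith [pi_pos]), integral_cexp_mul_sin_mul_I]
    push_cast
    ring
  have hint : IntegrableOn
      (fun p : ℝ × ℝ => (p.1 * g p.1) * Complex.exp (((h * p.1) * sin p.2 : ℝ) * Complex.I))
      (Set.Ioi 0 ×ˢ Set.Ioo (-π) π) := by
    rw [IntegrableOn, Measure.volume_eq_prod, ← Measure.prod_restrict]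
    refine (hg.comp_fst _).mul_bdd (c := 1)
      (by fun_prop : Continuous _).aestronglyMeasurable (.of_forall fun p => ?_)
    rw [Complex.norm_exp_ofReal_mul_I]
  rw [← Complex.integral_comp_polarCoord_symm,
    setIntegral_congr_fun polarCoord.open_target.measurableSet hpolar, polarCoord_target,
    Measure.volume_eq_prod, setIntegral_prod _ hint]
  simp only [hangular]
  rw [integral_const_mul]

lemma integral_mul_besselJ0_mul_cexp_neg_mul_sq (h : ℝ) {b : ℂ} (hb : 0 < b.re) :
    ∫ u in Set.Ioi (0:ℝ), (u * besselJ0 (h * u) : ℝ) * Complex.exp (-b * u ^ 2) =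
      1 / (2 * b) * Complex.exp (-h ^ 2 / (4 * b)) := by
  have hb0 : b ≠ 0 := Complex.ne_zero_of_re_pos hb
  have hradial := integral_comp_norm_mul_cexp_im_mul_I
    (integrable_mul_cexp_neg_mul_sq hb).integrableOn h
  have hgauss := GaussianFourier.integral_cexp_neg_mul_sq_norm_add hb (h * Complex.I) Complex.I
  have hinner (z : ℂ) : inner ℝ Complex.I z = z.im := by simp [Complex.inner]
  have hexp (z : ℂ) : Complex.exp (-b * ‖z‖ ^ 2 + h * Complex.I * (inner ℝ Complex.I z : ℝ)) =
      Complex.exp (-b * ‖z‖ ^ 2) * Complex.exp ((h * z.im : ℝ) * Complex.I) := by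
    rw [Complex.exp_add, hinner, Complex.ofReal_mul, mul_right_comm]
  simp only [hexp, Complex.finrank_real_complex, Nat.cast_ofNat, div_self (two_ne_zero' ℂ),
    Complex.cpow_one, Complex.norm_I, mul_pow, Complex.I_sq] at hgauss
  have hpi : (π : ℂ) ≠ 0 := Complex.ofReal_ne_zero.2 pi_ne_zero
  apply mul_left_cancel₀ (mul_ne_zero two_ne_zero hpi)
  rw [← hradial, hgauss]
  push_cast
  field_simp

lemma mul_exp_neg_mul_sq_le {b : ℝ} (hb : 0 < b) (x : ℝ) :
    x * exp (-b * x ^ 2) ≤ b ^ (-1 / 2 : ℝ) := by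
  have hsqrt : b ^ (-1 / 2 : ℝ) = (√b)⁻¹ := by
    rw [neg_div, rpow_neg hb.le, sqrt_eq_rpow]
  have hexp : √b * x ≤ exp (b * x ^ 2) := by
    have := add_one_le_exp (b * x ^ 2)
    nlinarith [sq_nonneg (√b * x - 1), sq_sqrt hb.le]
  rw [hsqrt, neg_mul, exp_neg, ← div_eq_mul_inv, div_le_iff₀ (exp_pos _), inv_mul_eq_div,
    le_div_iff₀ (sqrt_pos.2 hb), mul_comm]
  exact hexp

lemma integral_sq_mul_exp_neg_mul_sq_le {b : ℝ} (hb : 0 < b) {R : ℝ} (hR : 0 ≤ R) :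
    ∫ u in (0:ℝ)..R, u ^ 2 * exp (-b * u ^ 2) ≤ b ^ (-3 / 2 : ℝ) / 2 := by
  have hint := integrableOn_rpow_mul_exp_neg_mul_sq hb (s := 2) (by norm_num)
  have hval := integral_rpow_mul_exp_neg_mul_rpow (p := 2) (q := 2) two_pos (by norm_num) hb
  norm_num only [rpow_ofNat] at hint hval
  rw [intervalIntegral.integral_of_le hR]
  calc ∫ u in Set.Ioc 0 R, u ^ 2 * exp (-b * u ^ 2)
      ≤ ∫ u in Set.Ioi 0, u ^ 2 * exp (-b * u ^ 2) :=
        setIntegral_mono_set hint (.of_forall fun u => by positivity)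
          Set.Ioc_subset_Ioi_self.eventuallyLE
    _ = b ^ (-3 / 2 : ℝ) * (1 / 2) * Gamma (3 / 2) := by rw [hval]; norm_num
    _ ≤ b ^ (-3 / 2 : ℝ) * (1 / 2) * 1 := by gcongr; exact Gamma_three_div_two_lt_one.le
    _ = b ^ (-3 / 2 : ℝ) / 2 := by ring

lemma integral_mul_besselJ0_mul_cexp_neg_mul_sq_eq_add (b : ℂ) (R : ℝ) :
    ∫ u in (0:ℝ)..R, (u * besselJ0 u : ℝ) * Complex.exp (-b * u ^ 2) =
      (R * besselJ1 R : ℝ) * Complex.exp (-b * R ^ 2) +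
        2 * b * ∫ u in (0:ℝ)..R, (u ^ 2 * besselJ1 u : ℝ) * Complex.exp (-b * u ^ 2) := by
  have hderiv (u : ℝ) : HasDerivAt (fun u : ℝ => Complex.exp (-b * u ^ 2))
      (Complex.exp (-b * u ^ 2) * (-b * (2 * u))) u := by
    simpa using ((hasDerivAt_pow 2 (u : ℂ)).const_mul (-b)).cexp.comp_ofReal
  have hparts := intervalIntegral.integral_deriv_mul_eq_sub (a := 0) (b := R)
    (fun u _ => (hasDerivAt_mul_besselJ1 u).ofReal_comp) (fun u _ => hderiv u)
    ((by fun_prop : Continuous _).intervalIntegrable _ _)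
    ((by fun_prop : Continuous _).intervalIntegrable _ _)
  rw [intervalIntegral.integral_add ((by fun_prop : Continuous _).intervalIntegrable _ _)
    ((by fun_prop : Continuous _).intervalIntegrable _ _), zero_mul, Complex.ofReal_zero, zero_mul,
    sub_zero] at hparts
  rw [← hparts, ← intervalIntegral.integral_const_mul, add_assoc, left_eq_add,
    ← intervalIntegral.integral_add ((by fun_prop : Continuous _).intervalIntegrable _ _)
    ((by fun_prop : Continuous _).intervalIntegrable _ _)]
  refine intervalIntegral.integral_zero_ae (.of_forall fun u _ => ?_)
  push_cast
  ring

lemma norm_integral_mul_besselJ0_mul_cexp_neg_mul_sq_le {b : ℂ} (hb : 0 < b.re) {R : ℝ}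
    (hR : 0 ≤ R) :
    ‖∫ u in (0:ℝ)..R, (u * besselJ0 u : ℝ) * Complex.exp (-b * u ^ 2)‖ ≤
      (1 + ‖b‖ / b.re) * b.re ^ (-1 / 2 : ℝ) := by
  have hbdry : ‖(R * besselJ1 R : ℝ) * Complex.exp (-b * R ^ 2)‖ ≤ b.re ^ (-1 / 2 : ℝ) := by
    rw [norm_mul, norm_cexp_neg_mul_sq, Complex.norm_real, norm_mul, norm_of_nonneg hR]
    refine le_trans ?_ (mul_exp_neg_mul_sq_le hb R)
    gcongr
    exact mul_le_of_le_one_right hR (abs_besselJ1_le_one R)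
  have hrest : ‖∫ u in (0:ℝ)..R, (u ^ 2 * besselJ1 u : ℝ) * Complex.exp (-b * u ^ 2)‖ ≤
      b.re ^ (-3 / 2 : ℝ) / 2 := by
    refine (intervalIntegral.norm_integral_le_of_norm_le hR (.of_forall fun u _ => ?_)
      ((by fun_prop : Continuous _).intervalIntegrable _ _)).trans
      (integral_sq_mul_exp_neg_mul_sq_le hb hR)
    rw [norm_mul, norm_cexp_neg_mul_sq, Complex.norm_real, norm_mul, norm_of_nonneg (sq_nonneg u)]
    gcongr
    exact mul_le_of_le_one_right (sq_nonneg u) (abs_besselJ1_le_one u)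
  have hpow : b.re ^ (-3 / 2 : ℝ) = b.re ^ (-1 / 2 : ℝ) / b.re := by
    rw [← rpow_sub_one hb.ne']
    norm_num
  rw [integral_mul_besselJ0_mul_cexp_neg_mul_sq_eq_add]
  calc _ ≤ b.re ^ (-1 / 2 : ℝ) + 2 * ‖b‖ * (b.re ^ (-3 / 2 : ℝ) / 2) := by
        refine (norm_add_le _ _).trans (add_le_add hbdry ?_)
        rw [norm_mul, norm_mul, Complex.norm_two]
        gcongr
    _ = (1 + ‖b‖ / b.re) * b.re ^ (-1 / 2 : ℝ) := by
        rw [hpow]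
        ring

lemma tendsto_integral_mul_besselJ0_mul_cexp_neg_mul_sq {b : ℂ} (hb : 0 < b.re) :
    Tendsto (fun R : ℝ => ∫ u in (0:ℝ)..R, (u * besselJ0 u : ℝ) * Complex.exp (-b * u ^ 2))
      atTop (nhds (1 / (2 * b) * Complex.exp (-1 / (4 * b)))) := by
  have hint : IntegrableOn (fun u : ℝ => (u * besselJ0 u : ℝ) * Complex.exp (-b * u ^ 2))
      (Set.Ioi 0) := by
    refine ((integrable_mul_cexp_neg_mul_sq hb).bdd_mul (c := 1)
      (f := fun u => (besselJ0 u : ℂ)) (by fun_prop : Continuous _).aestronglyMeasurable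
      (.of_forall fun u => ?_)).integrableOn.congr_fun (fun u _ => ?_) measurableSet_Ioi
    · rw [Complex.norm_real]
      exact abs_one_div_pi_mul_integral_le_one fun θ => abs_cos_le_one _
    · push_cast
      ring
  have hval := integral_mul_besselJ0_mul_cexp_neg_mul_sq 1 hb
  simp only [one_mul, Complex.ofReal_one, one_pow] at hval
  rw [← hval]
  exact intervalIntegral_tendsto_integral_Ioi 0 hint tendsto_id

lemma re_inv_pos {w : ℂ} (hw : 0 < w.re) : 0 < w⁻¹.re := by
  rw [Complex.inv_re]
  exact div_pos hw (Complex.normSq_pos.2 (Complex.ne_zero_of_re_pos hw))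

lemma inv_sq_add_sq_eq_integral {w : ℂ} (hw : 0 < w.re) (u : ℝ) :
    ((u : ℂ) ^ 2 + w ^ 2)⁻¹ =
      ∫ t in Set.Ioi (0:ℝ), w⁻¹ * Complex.exp (-w * t) * Complex.exp (-(t * w⁻¹) * u ^ 2) := by
  have hw0 : w ≠ 0 := Complex.ne_zero_of_re_pos hw
  have hre : (-(w⁻¹ * u ^ 2 + w)).re < 0 := by
    have := re_inv_pos hw
    rw [Complex.neg_re, Complex.add_re, ← Complex.ofReal_pow, Complex.re_mul_ofReal, neg_lt_zero]
    positivity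
  have hexp (t : ℝ) : w⁻¹ * Complex.exp (-w * t) * Complex.exp (-(t * w⁻¹) * u ^ 2) =
      w⁻¹ * Complex.exp (-(w⁻¹ * u ^ 2 + w) * t) := by
    rw [mul_assoc, ← Complex.exp_add]
    ring_nf
  simp only [hexp]
  rw [integral_const_mul, integral_exp_mul_complex_Ioi hre, Complex.ofReal_zero, mul_zero,
    Complex.exp_zero, neg_div_neg_eq, one_div, ← mul_inv]
  congr 1
  field_simp

lemma integral_div_sq_add_sq_eq_integral_integral {w : ℂ} (hw : 0 < w.re) {f : ℝ → ℂ} {a b : ℝ}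
    (hf : IntervalIntegrable f volume a b) :
    ∫ u in a..b, f u / (u ^ 2 + w ^ 2) =
      ∫ t in Set.Ioi (0:ℝ), w⁻¹ * Complex.exp (-w * t) *
        ∫ u in a..b, f u * Complex.exp (-(t * w⁻¹) * u ^ 2) := by
  have hint : Integrable
      (Function.uncurry fun u t : ℝ =>
        w⁻¹ * Complex.exp (-w * t) * (f u * Complex.exp (-(t * w⁻¹) * u ^ 2)))
      ((volume.restrict (Set.uIoc a b)).prod (volume.restrict (Set.Ioi 0))) := by
    have hexp := (integrableOn_exp_mul_complex_Ioi (a := -w) (by simpa) 0).const_mul w⁻¹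
    refine ((hf.def'.mul_prod hexp).mul_bdd (c := 1)
      (g := fun p : ℝ × ℝ => Complex.exp (-(p.2 * w⁻¹) * p.1 ^ 2))
      (by fun_prop : Continuous _).aestronglyMeasurable ?_).congr (.of_forall fun p => ?_)
    · rw [Measure.prod_restrict]
      filter_upwards [ae_restrict_mem (measurableSet_uIoc.prod measurableSet_Ioi)]
        with p hp
      have ht : 0 < p.2 := hp.2
      have := re_inv_pos hw
      rw [norm_cexp_neg_mul_sq, exp_le_one_iff, Complex.re_ofReal_mul, neg_mul, neg_nonpos]
      positivity
    · simp only [Function.uncurry_def]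
      ring
  simp only [div_eq_mul_inv, inv_sq_add_sq_eq_integral hw, ← integral_const_mul,
    ← intervalIntegral.integral_const_mul]
  rw [← intervalIntegral_integral_swap hint]
  simp only [mul_left_comm]

lemma tendsto_integral_mul_besselJ0_div_sq_add_sq {w : ℂ} (hw : 0 < w.re) :
    Tendsto (fun R : ℝ => ∫ u in (0:ℝ)..R, (u * besselJ0 u : ℝ) / ((u : ℂ) ^ 2 + w ^ 2)) atTop
      (nhds (∫ t in Set.Ioi (0:ℝ), 1 / (2 * t) * Complex.exp (-w * t - w / (4 * t)))) := by
  have hw0 : w ≠ 0 := Complex.ne_zero_of_re_pos hw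
  have hre := re_inv_pos hw
  have hbound_int := ((integrableOn_rpow_mul_exp_neg_mul_rpow (s := -1 / 2) (p := 1) (by norm_num)
    one_pos hw).const_mul (‖w⁻¹‖ * (1 + ‖w⁻¹‖ / w⁻¹.re) * w⁻¹.re ^ (-1 / 2 : ℝ)))
  have hswap (R : ℝ) := integral_div_sq_add_sq_eq_integral_integral hw
    (f := fun u => (u * besselJ0 u : ℝ)) (a := 0) (b := R)
    ((by fun_prop : Continuous _).intervalIntegrable _ _)
  simp only [hswap]
  refine tendsto_integral_filter_of_dominated_convergence _ ?_ ?_ hbound_int ?_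
  · refine .of_forall fun R => Continuous.aestronglyMeasurable ?_
    refine (by fun_prop : Continuous fun t : ℝ => w⁻¹ * Complex.exp (-w * t)).mul ?_
    exact intervalIntegral.continuous_parametric_intervalIntegral_of_continuous' (by fun_prop) _ _
  · filter_upwards [eventually_ge_atTop 0] with R hR
    filter_upwards [ae_restrict_mem measurableSet_Ioi] with t (ht : 0 < t)
    have hb : (t * w⁻¹).re = t * w⁻¹.re := Complex.re_ofReal_mul _ _
    have hgauss := norm_integral_mul_besselJ0_mul_cexp_neg_mul_sq_le (b := t * w⁻¹)
      (by rw [hb]; positivity) hR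
    rw [hb, norm_mul, Complex.norm_of_nonneg ht.le, mul_div_mul_left _ _ ht.ne',
      mul_rpow ht.le hre.le] at hgauss
    rw [norm_mul, norm_mul, Complex.norm_exp, Complex.re_mul_ofReal, Complex.neg_re, rpow_one]
    calc _ ≤ ‖w⁻¹‖ * exp (-w.re * t) *
          ((1 + ‖w⁻¹‖ / w⁻¹.re) * (t ^ (-1 / 2 : ℝ) * w⁻¹.re ^ (-1 / 2 : ℝ))) := by gcongr
      _ = _ := by ring
  · filter_upwards [ae_restrict_mem measurableSet_Ioi] with t (ht : 0 < t)
    have ht0 : (t : ℂ) ≠ 0 := Complex.ofReal_ne_zero.2 ht.ne'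
    have hlim := (tendsto_integral_mul_besselJ0_mul_cexp_neg_mul_sq (b := t * w⁻¹)
      (by rw [Complex.re_ofReal_mul]; positivity)).const_mul (w⁻¹ * Complex.exp (-w * t))
    convert! hlim using 2
    rw [sub_eq_add_neg, Complex.exp_add]
    field_simp

lemma integral_of_even {E : Type*} [NormedAddCommGroup E] [NormedSpace ℝ E] {f : ℝ → E}
    (hf : f.Even) : ∫ x, f x = (2 : ℝ) • ∫ x in Set.Ioi (0:ℝ), f x := by
  have hcomp : (fun x => f (-x)) = f := funext hf
  by_cases hint : IntegrableOn f (Set.Ioi 0)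
  · have hint_neg : IntegrableOn f (Set.Iic 0) := by
      rw [integrableOn_Iic_iff_integrableOn_Iio]
      simpa only [hcomp] using
        IntegrableOn.comp_neg_Iio (c := (0:ℝ)) (f := f) (by rwa [neg_zero])
    have hneg : ∫ x in Set.Iic (0:ℝ), f x = ∫ x in Set.Ioi (0:ℝ), f x := by
      simpa only [hf _, neg_zero] using integral_comp_neg_Iic 0 f
    rw [← intervalIntegral.integral_Iic_add_Ioi hint_neg hint, hneg, two_smul]
  · rw [integral_undef hint, integral_undef fun h => hint h.integrableOn, smul_zero]

lemma integral_exp_smul_comp_exp {E : Type*} [NormedAddCommGroup E] [NormedSpace ℝ E]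
    (g : ℝ → E) : ∫ x, exp x • g (exp x) = ∫ y in Set.Ioi (0:ℝ), g y := by
  rw [← range_exp, ← Set.image_univ, integral_image_eq_integral_abs_deriv_smul MeasurableSet.univ
    (fun x _ => (hasDerivAt_exp x).hasDerivWithinAt) exp_injective.injOn, setIntegral_univ]
  simp only [abs_exp]

lemma integral_cexp_neg_mul_sub_div_eq_besselK0C (w : ℂ) :
    ∫ t in Set.Ioi (0:ℝ), 1 / (2 * t) * Complex.exp (-w * t - w / (4 * t)) = besselK0C w := by
  set g : ℝ → ℂ := fun t => 1 / (2 * t) * Complex.exp (-w * t - w / (4 * t)) with hg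
  have heven : Function.Even fun s : ℝ => Complex.exp (-w * cosh s) := fun s => by
    simp only [cosh_neg]
  have hsubst (s : ℝ) : (1 / 2 : ℝ) • exp s • g (1 / 2 * exp s) =
      (1 / 2 : ℝ) • Complex.exp (-w * cosh s) := by
    have hs : (exp s : ℂ) ≠ 0 := Complex.ofReal_ne_zero.2 (exp_ne_zero s)
    have hexp : -w * (1 / 2 * exp s : ℝ) - w / (4 * (1 / 2 * exp s : ℝ)) = -w * cosh s := by
      rw [cosh_eq, exp_neg]
      push_cast [-Complex.ofReal_exp]
      field_simp
      ring
    simp only [hg, hexp, Complex.real_smul]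
    push_cast [-Complex.ofReal_exp, -Complex.ofReal_cosh]
    field_simp
  have hhalf : ∫ t in Set.Ioi (0:ℝ), g t = (1 / 2 : ℝ) • ∫ t in Set.Ioi (0:ℝ), g (1 / 2 * t) := by
    rw [integral_comp_mul_left_Ioi' g 0 one_half_pos, mul_zero]
  rw [hhalf, ← integral_exp_smul_comp_exp fun t => g (1 / 2 * t), ← integral_smul]
  simp only [hsubst]
  rw [integral_smul, integral_of_even heven, smul_smul, one_div_mul_cancel two_ne_zero, one_smul,
    besselK0C]

/-- Hankel–Nicholson formula with `ν = 0`, `μ = 0`: for `h > 0` and `Re w > 0`,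
`∫₀^∞ u J₀(hu)/(u² + w²) du = K₀(hw)` as an improper (conditionally convergent)
integral. -/
theorem hankel_nicholson_nu_zero_mu_zero (h : ℝ) (hh : 0 < h)
    (w : ℂ) (hw : 0 < w.re) :
    Tendsto (fun R : ℝ =>
        ∫ u in (0:ℝ)..R, ((u * besselJ0 (h * u) : ℝ) : ℂ) / ((u : ℂ) ^ 2 + w ^ 2))
      atTop (nhds (besselK0C ((h : ℂ) * w))) := by
  have hscale (R : ℝ) :
      ∫ u in (0:ℝ)..R, ((u * besselJ0 (h * u) : ℝ) : ℂ) / ((u : ℂ) ^ 2 + w ^ 2) =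
        ∫ u in (0:ℝ)..(h * R), ((u * besselJ0 u : ℝ) : ℂ) / ((u : ℂ) ^ 2 + (h * w) ^ 2) := by
    have hh0 : (h : ℂ) ≠ 0 := Complex.ofReal_ne_zero.2 hh.ne'
    rw [← mul_zero h, ← intervalIntegral.smul_integral_comp_mul_left,
      ← intervalIntegral.integral_smul, mul_zero]
    refine intervalIntegral.integral_congr fun u _ => ?_
    simp only [Complex.real_smul]
    push_cast
    rw [mul_pow, mul_pow, ← mul_add]
    field_simp
  have hre : 0 < ((h : ℂ) * w).re := by
    rw [Complex.re_ofReal_mul]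
    positivity
  simp only [hscale]
  rw [← integral_cexp_neg_mul_sub_div_eq_besselK0C]
  exact (tendsto_integral_mul_besselJ0_div_sq_add_sq hre).comp (tendsto_id.const_mul_atTop hh)
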